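/- arXiv:math/0007060 — 2 statements merged into one kernel-verified Lean document; each statement's English description precedes it below -/
import Mathlib

section
/- Let X^i_α : ℝ^p × ℝ^n → ℝ and c : ℝ^p × ℝ^n → ℝ be smooth. A smooth map x : ℝ^p → ℝ^n is an extremal of the Lagrangian L = (½ h^{αβ} g_{ij} x^i_α x^j_β − h^{αβ} g_{ij} x^i_α X^j_β + c) √|det h| if and only if it satisfies the generalized Poisson (potential map) equations h^{αβ} x^i_{αβ} = g^{ij} ∂c/∂x^j + h^{αβ} (∇_k X^i_β − g_{kj} g^{il} ∇_l X^j_β) x^k_α + h^{αβ} D_α X^i_β, where all quantities depending on (t,x) are evaluated at (t, x(t)). -/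
/-!
Lowering the index of `X` to `A_{iα} = g_{ij} X^j_α` turns the coupling term of `L` into
`h^{αβ} x^i_α A_{iβ}`, free of the metric `g`, and the momenta into
`√|det h| h^{αβ} (g_{kj} x^j_β - A_{kβ})`. The divergence of a density `√|det h| h^{αβ} W_β` is
`√|det h| h^{αβ} D_α W_β`. Hence, by metric compatibility of the Levi-Civita connection of `g`, the
velocity terms of the Euler–Lagrange expression contribute `-√|det h| g_{ki} h^{αβ} x^i_{αβ}`.
Since this connection is moreover torsion-free, the remaining terms in `A` are the curl
`∂_m A_{kβ} - ∂_k A_{mβ} = g_{ki} (∇_m X^i_β - g_{jm} g^{il} ∇_l X^j_β)` contracted with `x^m_α`,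
together with `h^{αβ} g_{ki} D_α X^i_β`. Altogether the Euler–Lagrange expression is
`√|det h| g_{ki}` applied to the defect of the generalized Poisson equations, and `√|det h|` and `g`
are invertible.
-/

open scoped BigOperators

noncomputable section

/-- Partial derivative of `f : ℝ^m → ℝ` at `t` in the `α`-th coordinate direction. -/
def pd {m : ℕ} (α : Fin m) (f : (Fin m → ℝ) → ℝ) (t : Fin m → ℝ) : ℝ :=
  fderiv ℝ f t (Pi.single α 1)

/-- Componentwise inverse of a square array of reals (matrix inversion). -/
def minv {m : ℕ} (A : Fin m → Fin m → ℝ) : Fin m → Fin m → ℝ :=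
  fun i j => (Matrix.of A)⁻¹ i j

/-- `√|det h(t)|`, the volume density of the metric `h`. -/
def sqrtDet {p : ℕ} (h : (Fin p → ℝ) → Fin p → Fin p → ℝ) (t : Fin p → ℝ) : ℝ :=
  Real.sqrt |(Matrix.of (h t)).det|

/-- First jet `x^i_α = ∂x^i/∂t^α` of a map `x : ℝ^p → ℝ^n`. -/
def jet {p n : ℕ} (x : (Fin p → ℝ) → Fin n → ℝ) (t : Fin p → ℝ) :
    Fin n → Fin p → ℝ :=
  fun i α => pd α (fun s => x s i) t

/-- Christoffel symbols `G^i_{jk} = ½ g^{il}(∂g_{lj}/∂x^k + ∂g_{lk}/∂x^j − ∂g_{jk}/∂x^l)`. -/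
def christoffel {m : ℕ} (g : (Fin m → ℝ) → Fin m → Fin m → ℝ)
    (i j k : Fin m) (q : Fin m → ℝ) : ℝ :=
  (1 / 2) * ∑ l, minv (g q) i l *
    (pd k (fun y => g y l j) q + pd j (fun y => g y l k) q - pd l (fun y => g y j k) q)

/-- Covariant second jet
`x^i_{αβ} = ∂²x^i/∂t^α∂t^β − H^γ_{αβ} x^i_γ + G^i_{jk} x^j_α x^k_β`. -/
def covHess {p n : ℕ} (h : (Fin p → ℝ) → Fin p → Fin p → ℝ)
    (g : (Fin n → ℝ) → Fin n → Fin n → ℝ)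
    (x : (Fin p → ℝ) → Fin n → ℝ) (i : Fin n) (α β : Fin p) (t : Fin p → ℝ) : ℝ :=
  pd α (fun s => jet x s i β) t
    - (∑ γ, christoffel h γ α β t * jet x t i γ)
    + ∑ j, ∑ k, christoffel g i j k (x t) * jet x t j α * jet x t k β

/-- `∇_j X^i_α = ∂X^i_α/∂x^j + G^i_{jk} X^k_α`. -/
def nablaX {p n : ℕ} (g : (Fin n → ℝ) → Fin n → Fin n → ℝ)
    (X : Fin n → Fin p → (Fin p → ℝ) → (Fin n → ℝ) → ℝ)
    (j i : Fin n) (α : Fin p) (t : Fin p → ℝ) (q : Fin n → ℝ) : ℝ :=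
  pd j (fun y => X i α t y) q + ∑ k, christoffel g i j k q * X k α t q

/-- `D_β X^i_α = ∂X^i_α/∂t^β − H^γ_{βα} X^i_γ`. -/
def Dt {p n : ℕ} (h : (Fin p → ℝ) → Fin p → Fin p → ℝ)
    (X : Fin n → Fin p → (Fin p → ℝ) → (Fin n → ℝ) → ℝ)
    (β : Fin p) (i : Fin n) (α : Fin p) (t : Fin p → ℝ) (q : Fin n → ℝ) : ℝ :=
  pd β (fun s => X i α s q) t - ∑ γ, christoffel h γ β α t * X i γ t q

/-- External tensor `F_j{}^i{}_α = ∇_j X^i_α − g_{hj} g^{ik} ∇_k X^h_α`. -/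
def Fext {p n : ℕ} (g : (Fin n → ℝ) → Fin n → Fin n → ℝ)
    (X : Fin n → Fin p → (Fin p → ℝ) → (Fin n → ℝ) → ℝ)
    (j i : Fin n) (α : Fin p) (t : Fin p → ℝ) (q : Fin n → ℝ) : ℝ :=
  nablaX g X j i α t q
    - ∑ h', ∑ k, g q h' j * minv (g q) i k * nablaX g X k h' α t q

/-- Potential energy `f = ½ h^{αβ} g_{ij} X^i_α X^j_β`. -/
def potE {p n : ℕ} (h : (Fin p → ℝ) → Fin p → Fin p → ℝ)
    (g : (Fin n → ℝ) → Fin n → Fin n → ℝ)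
    (X : Fin n → Fin p → (Fin p → ℝ) → (Fin n → ℝ) → ℝ)
    (t : Fin p → ℝ) (q : Fin n → ℝ) : ℝ :=
  (1 / 2) * ∑ α, ∑ β, ∑ i, ∑ j, minv (h t) α β * g q i j * X i α t q * X j β t q

/-- A map `x` is an extremal of the first-order Lagrangian `L = L(t, x, x_·)` iff it
satisfies the Euler–Lagrange equations
`∂L/∂x^k − (d/dt^α)(∂L/∂x^k_α) = 0` along the first jet of `x`. -/
def IsExtremal {p n : ℕ}
    (L : (Fin p → ℝ) → (Fin n → ℝ) → (Fin n → Fin p → ℝ) → ℝ)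
    (x : (Fin p → ℝ) → Fin n → ℝ) : Prop :=
  ∀ (t : Fin p → ℝ) (k : Fin n),
    fderiv ℝ (fun q => L t q (jet x t)) (x t) (Pi.single k 1)
      - (∑ α, pd α
          (fun s => fderiv ℝ (fun v => L s (x s) v) (jet x s)
            (Pi.single k (Pi.single α 1))) t) = 0

section MatrixCalculus

variable {𝕜 E ι : Type*} [NontriviallyNormedField 𝕜] [NormedAddCommGroup E] [NormedSpace 𝕜 E]
  [Fintype ι] [DecidableEq ι] {A : E → Matrix ι ι 𝕜} {A' : ι → ι → E →L[𝕜] 𝕜} {t : E}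

theorem det_updateRow_eq_sum_adjugate {R : Type*} [CommRing R] (M : Matrix ι ι R) (i : ι)
    (b : ι → R) : (M.updateRow i b).det = ∑ j, M.adjugate j i * b j := by
  rw [← Matrix.cramer_transpose_apply, Matrix.cramer_eq_adjugate_mulVec,
    ← Matrix.adjugate_transpose]
  rfl

theorem hasFDerivAt_det (hA : ∀ i j, HasFDerivAt (fun s => A s i j) (A' i j) t) :
    HasFDerivAt (fun s => (A s).det) (∑ i, ∑ j, (A t).adjugate j i • A' i j) t := by
  let D : ContinuousMultilinearMap 𝕜 (fun _ : ι => ι → 𝕜) 𝕜 :=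
    { Matrix.detRowAlternating.toMultilinearMap with
      cont := (continuous_id (X := Matrix ι ι 𝕜)).matrix_det }
  have hrows : HasFDerivAt (fun s i j => A s i j)
      (ContinuousLinearMap.pi fun i => ContinuousLinearMap.pi fun j => A' i j) t :=
    hasFDerivAt_pi.mpr fun i => hasFDerivAt_pi.mpr fun j => hA i j
  refine ((D.hasFDerivAt _).comp t hrows).congr_fderiv (ContinuousLinearMap.ext fun w => ?_)
  have hupdate : ∀ i, D (Function.update (A t) i fun j => A' i j w) =
      ∑ j, (A t).adjugate j i * A' i j w := fun i =>
    det_updateRow_eq_sum_adjugate (A t) i fun j => A' i j w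
  simpa [ContinuousMultilinearMap.linearDeriv_apply] using!
    Finset.sum_congr rfl fun i _ => hupdate i

theorem differentiableAt_matrix_inv_apply (hA : ∀ i j, DifferentiableAt 𝕜 (fun s => A s i j) t)
    (hdet : (A t).det ≠ 0) (i j : ι) : DifferentiableAt 𝕜 (fun s => (A s)⁻¹ i j) t := by
  have hupdate : ∀ k l, DifferentiableAt 𝕜 (fun s => (A s).updateRow j (Pi.single i 1) k l) t := by
    intro k l
    by_cases hk : k = j
    · simp [hk]
    · simpa [Matrix.updateRow_apply, hk] using hA k l
  simp only [Matrix.inv_def, Matrix.smul_apply, Matrix.adjugate_apply, Ring.inverse_eq_inv']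
  exact ((hasFDerivAt_det fun k l => (hA k l).hasFDerivAt).differentiableAt.inv hdet).smul
    (hasFDerivAt_det fun k l => (hupdate k l).hasFDerivAt).differentiableAt

theorem hasFDerivAt_matrix_inv_apply (hA : ∀ i j, HasFDerivAt (fun s => A s i j) (A' i j) t)
    (hdet : (A t).det ≠ 0) (i j : ι) :
    HasFDerivAt (fun s => (A s)⁻¹ i j)
      (-∑ k, ∑ l, ((A t)⁻¹ i k * (A t)⁻¹ l j) • A' k l) t := by
  have hinv : ∀ l, DifferentiableAt 𝕜 (fun s => (A s)⁻¹ l j) t := fun l =>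
    differentiableAt_matrix_inv_apply (fun k l => (hA k l).differentiableAt) hdet l j
  -- The resolvent identity avoids norming matrices: its middle factor vanishes at `t`, so the
  -- product rule leaves a single term.
  have hresolvent : (fun s => (A s)⁻¹ i j) =ᶠ[nhds t] fun s => (A t)⁻¹ i j -
      ∑ k, ∑ l, (A t)⁻¹ i k * (A s k l - A t k l) * (A s)⁻¹ l j := by
    filter_upwards [(hasFDerivAt_det hA).continuousAt.eventually_ne hdet] with s hs
    have hunit : IsUnit (A t) ↔ IsUnit (A s) := by simp [Matrix.isUnit_iff_isUnit_det, hdet, hs]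
    rw [Finset.sum_comm, eq_sub_iff_add_eq, ← eq_sub_iff_add_eq']
    simpa [Matrix.mul_apply, Finset.sum_mul] using (congrFun₂ (Matrix.inv_sub_inv hunit) i j).symm
  have hterm : ∀ k l, HasFDerivAt (fun s => (A t)⁻¹ i k * (A s k l - A t k l) * (A s)⁻¹ l j)
      (((A t)⁻¹ i k * (A t)⁻¹ l j) • A' k l) t := fun k l => by
    refine ((((hA k l).sub_const (A t k l)).const_mul ((A t)⁻¹ i k)).mul
      (hinv l).hasFDerivAt).congr_fderiv (ContinuousLinearMap.ext fun w => ?_)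
    simp [mul_assoc, mul_left_comm]
  have hsum := HasFDerivAt.fun_sum (u := Finset.univ) fun k _ =>
    HasFDerivAt.fun_sum (u := Finset.univ) fun l _ => hterm k l
  exact (hsum.const_sub _).congr_of_eventuallyEq hresolvent

end MatrixCalculus

theorem hasFDerivAt_sqrt_abs {F : Type*} [NormedAddCommGroup F] [NormedSpace ℝ F] {f : F → ℝ}
    {f' : F →L[ℝ] ℝ} {a : F} (hf : HasFDerivAt f f' a) (ha : f a ≠ 0) :
    HasFDerivAt (fun s => √|f s|) ((√|f a| / (2 * f a)) • f') a := by
  refine ((hf.abs ha).sqrt (abs_ne_zero.mpr ha)).congr_fderiv ?_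
  rw [smul_smul]
  congr 1
  have : √|f a| ≠ 0 := by positivity
  field_simp
  rw [Real.sq_sqrt (abs_nonneg _), sign_mul_self]

section PartialDerivative

variable {m : ℕ} {ι : Type*} {α : Fin m} {f k : (Fin m → ℝ) → ℝ} {t : Fin m → ℝ}

theorem pd_const (r : ℝ) : pd α (fun _ => r) t = 0 := by
  simp [pd]

theorem pd_sub (hf : DifferentiableAt ℝ f t) (hk : DifferentiableAt ℝ k t) :
    pd α (fun s => f s - k s) t = pd α f t - pd α k t := by
  simp [pd, fderiv_fun_sub hf hk]

theorem pd_mul (hf : DifferentiableAt ℝ f t) (hk : DifferentiableAt ℝ k t) :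
    pd α (fun s => f s * k s) t = pd α f t * k t + f t * pd α k t := by
  simp [pd, fderiv_fun_mul hf hk, mul_comm, add_comm]

theorem pd_sum {u : Finset ι} {F : ι → (Fin m → ℝ) → ℝ}
    (hF : ∀ i ∈ u, DifferentiableAt ℝ (F i) t) :
    pd α (fun s => ∑ i ∈ u, F i s) t = ∑ i ∈ u, pd α (F i) t := by
  simp [pd, fderiv_fun_sum hF]

theorem fderiv_apply_eq_sum_pd (f : (Fin m → ℝ) → ℝ) (t w : Fin m → ℝ) :
    fderiv ℝ f t w = ∑ l, pd l f t * w l := by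
  conv_lhs => rw [pi_eq_sum_univ' w]
  simp [pd, mul_comm]

theorem jet_eq_fderiv {p n : ℕ} {x : (Fin p → ℝ) → Fin n → ℝ} {t : Fin p → ℝ}
    (hx : DifferentiableAt ℝ x t) (i : Fin n) (α : Fin p) :
    jet x t i α = fderiv ℝ x t (Pi.single α 1) i := by
  simp [jet, pd, fderiv_apply hx]

theorem pd_comp {p n : ℕ} {F : (Fin n → ℝ) → ℝ} {x : (Fin p → ℝ) → Fin n → ℝ} {t : Fin p → ℝ}
    (hF : DifferentiableAt ℝ F (x t)) (hx : DifferentiableAt ℝ x t) (α : Fin p) :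
    pd α (fun s => F (x s)) t = ∑ l, pd l F (x t) * jet x t l α := by
  rw [pd, fderiv_fun_comp t hF hx, ContinuousLinearMap.comp_apply, fderiv_apply_eq_sum_pd]
  simp only [jet_eq_fderiv hx]

theorem pd_comp_graph {p n : ℕ} {F : (Fin p → ℝ) → (Fin n → ℝ) → ℝ}
    {x : (Fin p → ℝ) → Fin n → ℝ} {t : Fin p → ℝ}
    (hF : DifferentiableAt ℝ (fun z : (Fin p → ℝ) × (Fin n → ℝ) => F z.1 z.2) (t, x t))
    (hx : DifferentiableAt ℝ x t) (α : Fin p) :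
    pd α (fun s => F s (x s)) t =
      pd α (fun s => F s (x t)) t + ∑ l, pd l (F t) (x t) * jet x t l α := by
  have htime : HasFDerivAt (fun s => F s (x t)) _ t :=
    hF.hasFDerivAt.comp (f := fun s => (s, x t)) t (hasFDerivAt_prodMk_left t (x t))
  have hspace : HasFDerivAt (F t) _ (x t) :=
    hF.hasFDerivAt.comp (f := fun q => (t, q)) (x t) (hasFDerivAt_prodMk_right t (x t))
  have hgraph : HasFDerivAt (fun s => F s (x s)) _ t :=
    hF.hasFDerivAt.comp (f := fun s => (s, x s)) t ((hasFDerivAt_id t).prodMk hx.hasFDerivAt)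
  rw [← pd_comp hspace.differentiableAt hx, pd, pd, pd, hgraph.fderiv, htime.fderiv,
    fderiv_fun_comp t hspace.differentiableAt hx, hspace.fderiv]
  simp [← map_add]

end PartialDerivative

section InverseMetric

variable {m : ℕ} {A : Fin m → Fin m → ℝ}

theorem sum_minv_mul_sum_mul (hA : (Matrix.of A).det ≠ 0) (b : Fin m → ℝ) (i : Fin m) :
    ∑ j, minv A i j * ∑ k, A j k * b k = b i := by
  have h : (Matrix.of A)⁻¹.mulVec ((Matrix.of A).mulVec b) = b := by
    rw [Matrix.mulVec_mulVec, Matrix.nonsing_inv_mul _ hA.isUnit, Matrix.one_mulVec]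
  exact congrFun h i

theorem sum_mul_sum_minv_mul (hA : (Matrix.of A).det ≠ 0) (b : Fin m → ℝ) (i : Fin m) :
    ∑ j, A i j * ∑ k, minv A j k * b k = b i := by
  have h : (Matrix.of A).mulVec ((Matrix.of A)⁻¹.mulVec b) = b := by
    rw [Matrix.mulVec_mulVec, Matrix.mul_nonsing_inv _ hA.isUnit, Matrix.one_mulVec]
  exact congrFun h i

theorem minv_symm (hA : ∀ i j, A i j = A j i) (i j : Fin m) : minv A i j = minv A j i := by
  have h : (Matrix.of A).IsSymm := Matrix.ext fun i j => hA j i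
  exact h.inv.apply j i

theorem pd_minv {p : ℕ} {h : (Fin p → ℝ) → Fin p → Fin p → ℝ} {t : Fin p → ℝ}
    (hdiff : ∀ α β, DifferentiableAt ℝ (fun s => h s α β) t)
    (hdet : (Matrix.of (h t)).det ≠ 0) (γ α β : Fin p) :
    pd γ (fun s => minv (h s) α β) t =
      -∑ l, ∑ m, minv (h t) α l * minv (h t) m β * pd γ (fun s => h s l m) t := by
  have := hasFDerivAt_matrix_inv_apply (A := fun s => Matrix.of (h s))
    (fun α β => (hdiff α β).hasFDerivAt) hdet α β
  simp [pd, minv, this.fderiv]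

theorem differentiableAt_minv {p : ℕ} {h : (Fin p → ℝ) → Fin p → Fin p → ℝ} {t : Fin p → ℝ}
    (hdiff : ∀ α β, DifferentiableAt ℝ (fun s => h s α β) t)
    (hdet : (Matrix.of (h t)).det ≠ 0) (α β : Fin p) :
    DifferentiableAt ℝ (fun s => minv (h s) α β) t :=
  differentiableAt_matrix_inv_apply (A := fun s => Matrix.of (h s)) hdiff hdet α β

end InverseMetric

section LeviCivita

variable {m : ℕ} {g : (Fin m → ℝ) → Fin m → Fin m → ℝ} {q : Fin m → ℝ}

theorem christoffel_symm (gsymm : ∀ q i j, g q i j = g q j i) (i j k : Fin m) :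
    christoffel g i j k q = christoffel g i k j q := by
  simp only [christoffel, gsymm _ j k, add_comm (pd k _ q)]

theorem sum_mul_christoffel (gdet : (Matrix.of (g q)).det ≠ 0) (i j k : Fin m) :
    ∑ l, g q i l * christoffel g l j k q =
      (1 / 2) * (pd k (fun y => g y i j) q + pd j (fun y => g y i k) q
        - pd i (fun y => g y j k) q) := by
  simp only [christoffel, mul_left_comm (g q i _), ← Finset.mul_sum]
  rw [sum_mul_sum_minv_mul gdet (fun l => pd k (fun y => g y l j) q + pd j (fun y => g y l k) q
    - pd l (fun y => g y j k) q)]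

theorem pd_metric (gsymm : ∀ q i j, g q i j = g q j i) (gdet : (Matrix.of (g q)).det ≠ 0)
    (k i j : Fin m) :
    pd k (fun y => g y i j) q =
      ∑ l, g q i l * christoffel g l j k q + ∑ l, g q j l * christoffel g l i k q := by
  rw [sum_mul_christoffel gdet, sum_mul_christoffel gdet]
  simp only [gsymm _ j i]
  ring

theorem pd_minv_eq_christoffel (gsymm : ∀ q i j, g q i j = g q j i)
    (gdiff : ∀ i j, DifferentiableAt ℝ (fun y => g y i j) q)
    (gdet : (Matrix.of (g q)).det ≠ 0) (k i j : Fin m) :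
    pd k (fun y => minv (g y) i j) q =
      -(∑ l, christoffel g i l k q * minv (g q) l j)
        - ∑ l, minv (g q) i l * christoffel g j l k q := by
  have hleft : ∑ a, ∑ b, minv (g q) i a * minv (g q) b j *
      ∑ l, g q a l * christoffel g l b k q = ∑ l, christoffel g i l k q * minv (g q) l j := by
    rw [Finset.sum_comm]
    refine Finset.sum_congr rfl fun b _ => ?_
    simp only [mul_right_comm _ (minv (g q) b j), ← Finset.sum_mul]
    rw [sum_minv_mul_sum_mul gdet (fun l => christoffel g l b k q)]
  have hright : ∑ a, ∑ b, minv (g q) i a * minv (g q) b j *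
      ∑ l, g q b l * christoffel g l a k q = ∑ l, minv (g q) i l * christoffel g j l k q := by
    refine Finset.sum_congr rfl fun a _ => ?_
    simp only [mul_assoc, ← Finset.mul_sum, minv_symm (gsymm q) _ j]
    rw [sum_minv_mul_sum_mul gdet (fun l => christoffel g l a k q)]
  simp only [pd_minv gdiff gdet, pd_metric gsymm gdet, mul_add, Finset.sum_add_distrib, hleft,
    hright]
  ring

theorem sum_christoffel_self (gsymm : ∀ q i j, g q i j = g q j i) (k : Fin m) :
    ∑ i, christoffel g i i k q =
      (1 / 2) * ∑ i, ∑ j, minv (g q) j i * pd k (fun y => g y i j) q := by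
  have hcancel : ∑ i, ∑ j, minv (g q) i j * pd i (fun y => g y j k) q =
      ∑ i, ∑ j, minv (g q) i j * pd j (fun y => g y i k) q := by
    rw [Finset.sum_comm]
    simp only [minv_symm (gsymm q)]
  simp only [christoffel, ← Finset.mul_sum, mul_sub, mul_add, Finset.sum_sub_distrib,
    Finset.sum_add_distrib, hcancel, add_sub_cancel_right]
  rw [Finset.sum_comm]

end LeviCivita

section VolumeDensity

variable {p : ℕ} {h : (Fin p → ℝ) → Fin p → Fin p → ℝ} {t : Fin p → ℝ}

theorem sqrtDet_pos (hdet : (Matrix.of (h t)).det ≠ 0) : 0 < sqrtDet h t :=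
  Real.sqrt_pos.mpr (abs_pos.mpr hdet)

theorem hasFDerivAt_sqrtDet (hdiff : ∀ α β, DifferentiableAt ℝ (fun s => h s α β) t)
    (hdet : (Matrix.of (h t)).det ≠ 0) :
    HasFDerivAt (sqrtDet h)
      ((sqrtDet h t / 2) • ∑ α, ∑ β, minv (h t) β α • fderiv ℝ (fun s => h s α β) t) t := by
  refine (hasFDerivAt_sqrt_abs (hasFDerivAt_det (A := fun s => Matrix.of (h s))
    fun α β => (hdiff α β).hasFDerivAt) hdet).congr_fderiv ?_
  simp only [minv, Matrix.inv_def, Matrix.smul_apply, Ring.inverse_eq_inv', smul_assoc,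
    ← Finset.smul_sum]
  rw [smul_smul, sqrtDet, div_mul_eq_div_div, div_eq_mul_inv _ (Matrix.det _)]

theorem pd_sqrtDet (hsymm : ∀ t α β, h t α β = h t β α)
    (hdiff : ∀ α β, DifferentiableAt ℝ (fun s => h s α β) t)
    (hdet : (Matrix.of (h t)).det ≠ 0) (α : Fin p) :
    pd α (sqrtDet h) t = sqrtDet h t * ∑ γ, christoffel h γ γ α t := by
  rw [pd, (hasFDerivAt_sqrtDet hdiff hdet).fderiv, sum_christoffel_self hsymm]
  simp [pd, div_eq_mul_inv, mul_assoc]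

theorem sum_pd_sqrtDet_mul_minv (hsymm : ∀ t α β, h t α β = h t β α)
    (hdiff : ∀ α β, DifferentiableAt ℝ (fun s => h s α β) t)
    (hdet : (Matrix.of (h t)).det ≠ 0) (β : Fin p) :
    ∑ α, pd α (fun s => sqrtDet h s * minv (h s) α β) t =
      -(sqrtDet h t * ∑ α, ∑ γ, minv (h t) α γ * christoffel h β α γ t) := by
  have hcancel : ∑ α, ∑ γ, christoffel h α γ α t * minv (h t) γ β =
      ∑ α, (∑ γ, christoffel h γ γ α t) * minv (h t) α β := by
    rw [Finset.sum_comm]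
    simp only [Finset.sum_mul, christoffel_symm hsymm _ _ _]
  have htrace : ∑ α, ∑ γ, minv (h t) α γ * christoffel h β γ α t =
      ∑ α, ∑ γ, minv (h t) α γ * christoffel h β α γ t := by
    simp only [christoffel_symm hsymm β]
  simp only [pd_mul (hasFDerivAt_sqrtDet hdiff hdet).differentiableAt
    (differentiableAt_minv hdiff hdet _ β), pd_sqrtDet hsymm hdiff hdet,
    pd_minv_eq_christoffel hsymm hdiff hdet, mul_sub, mul_neg, mul_assoc, Finset.sum_add_distrib,
    Finset.sum_sub_distrib, Finset.sum_neg_distrib, ← Finset.mul_sum, hcancel, htrace]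
  ring

end VolumeDensity

section MetricTrace

/-- The trace `h^{αβ} T_{αβ}` of a two-index array `T` with respect to the metric whose coefficient
array is `A`. -/
def metricTrace {p : ℕ} (A T : Fin p → Fin p → ℝ) : ℝ :=
  ∑ α, ∑ β, minv A α β * T α β

variable {p : ℕ} {A : Fin p → Fin p → ℝ} {ι : Type*}

theorem metricTrace_add (S T : Fin p → Fin p → ℝ) :
    metricTrace A (fun α β => S α β + T α β) = metricTrace A S + metricTrace A T := by
  simp only [metricTrace, mul_add, Finset.sum_add_distrib]

theorem metricTrace_sub (S T : Fin p → Fin p → ℝ) :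
    metricTrace A (fun α β => S α β - T α β) = metricTrace A S - metricTrace A T := by
  simp only [metricTrace, mul_sub, Finset.sum_sub_distrib]

theorem metricTrace_const_mul (r : ℝ) (T : Fin p → Fin p → ℝ) :
    metricTrace A (fun α β => r * T α β) = r * metricTrace A T := by
  simp only [metricTrace, mul_left_comm _ r, Finset.mul_sum]

theorem metricTrace_sum (u : Finset ι) (T : ι → Fin p → Fin p → ℝ) :
    metricTrace A (fun α β => ∑ i ∈ u, T i α β) = ∑ i ∈ u, metricTrace A (T i) := by
  simp only [metricTrace, Finset.mul_sum]
  rw [Finset.sum_comm]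
  simp only [Finset.sum_comm (s := u)]
  rw [Finset.sum_comm]

theorem metricTrace_swap (hA : ∀ α β, A α β = A β α) (T : Fin p → Fin p → ℝ) :
    metricTrace A (fun α β => T β α) = metricTrace A T := by
  rw [metricTrace, Finset.sum_comm]
  simp only [minv_symm hA, metricTrace]

theorem fderiv_metricTrace_apply {E : Type*} [NormedAddCommGroup E] [NormedSpace ℝ E]
    {T : Fin p → Fin p → E → ℝ} {z : E} (hT : ∀ α β, DifferentiableAt ℝ (T α β) z) (w : E) :
    fderiv ℝ (fun z => metricTrace A fun α β => T α β z) z w =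
      metricTrace A fun α β => fderiv ℝ (T α β) z w := by
  have h := HasFDerivAt.fun_sum (u := Finset.univ) fun α _ =>
    HasFDerivAt.fun_sum (u := Finset.univ) fun β _ =>
      (hT α β).hasFDerivAt.const_mul (minv A α β)
  simp [metricTrace, h.fderiv]

theorem differentiableAt_metricTrace {E : Type*} [NormedAddCommGroup E] [NormedSpace ℝ E]
    {T : Fin p → Fin p → E → ℝ} {z : E} (hT : ∀ α β, DifferentiableAt ℝ (T α β) z) :
    DifferentiableAt ℝ (fun z => metricTrace A fun α β => T α β z) z :=
  DifferentiableAt.fun_sum fun α _ => DifferentiableAt.fun_sum fun β _ => (hT α β).const_mul _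

end MetricTrace

section CovariantDerivative

/-- The covariant derivative `∇_α W_β = ∂_α W_β - H^γ_{αβ} W_γ` of a covector field `W`. -/
def covDeriv {p : ℕ} (h : (Fin p → ℝ) → Fin p → Fin p → ℝ) (W : Fin p → (Fin p → ℝ) → ℝ)
    (t : Fin p → ℝ) (α β : Fin p) : ℝ :=
  pd α (W β) t - ∑ γ, christoffel h γ α β t * W γ t

variable {p : ℕ} {h : (Fin p → ℝ) → Fin p → Fin p → ℝ} {t : Fin p → ℝ} {ι : Type*}

theorem covDeriv_sub {V W : Fin p → (Fin p → ℝ) → ℝ} (hV : ∀ β, DifferentiableAt ℝ (V β) t)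
    (hW : ∀ β, DifferentiableAt ℝ (W β) t) (α β : Fin p) :
    covDeriv h (fun β s => V β s - W β s) t α β = covDeriv h V t α β - covDeriv h W t α β := by
  simp only [covDeriv, pd_sub (hV β) (hW β), mul_sub, Finset.sum_sub_distrib]
  ring

theorem covDeriv_sum_mul {u : Finset ι} {f : ι → (Fin p → ℝ) → ℝ}
    {W : ι → Fin p → (Fin p → ℝ) → ℝ} (hf : ∀ i ∈ u, DifferentiableAt ℝ (f i) t)
    (hW : ∀ i ∈ u, ∀ β, DifferentiableAt ℝ (W i β) t) (α β : Fin p) :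
    covDeriv h (fun β s => ∑ i ∈ u, f i s * W i β s) t α β =
      ∑ i ∈ u, f i t * covDeriv h (W i) t α β + ∑ i ∈ u, pd α (f i) t * W i β t := by
  have hpd : pd α (fun s => ∑ i ∈ u, f i s * W i β s) t =
      ∑ i ∈ u, (pd α (f i) t * W i β t + f i t * pd α (W i β) t) := by
    rw [pd_sum fun i hi => (hf i hi).fun_mul (hW i hi β)]
    exact Finset.sum_congr rfl fun i hi => pd_mul (hf i hi) (hW i hi β)
  have hconnection : ∑ γ, christoffel h γ α β t * ∑ i ∈ u, f i t * W i γ t =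
      ∑ i ∈ u, f i t * ∑ γ, christoffel h γ α β t * W i γ t := by
    simp only [Finset.mul_sum, mul_left_comm (f _ t)]
    exact Finset.sum_comm
  rw [covDeriv, hpd, hconnection]
  simp only [covDeriv, mul_sub, Finset.sum_add_distrib, Finset.sum_sub_distrib]
  ring

theorem sum_pd_sqrtDet_mul_minv_mul (hsymm : ∀ t α β, h t α β = h t β α)
    (hdiff : ∀ α β, DifferentiableAt ℝ (fun s => h s α β) t)
    (hdet : (Matrix.of (h t)).det ≠ 0) {W : Fin p → (Fin p → ℝ) → ℝ}
    (hW : ∀ β, DifferentiableAt ℝ (W β) t) :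
    ∑ α, pd α (fun s => ∑ β, sqrtDet h s * minv (h s) α β * W β s) t =
      sqrtDet h t * metricTrace (h t) (covDeriv h W t) := by
  have hdensity : ∀ α β, DifferentiableAt ℝ (fun s => sqrtDet h s * minv (h s) α β) t :=
    fun α β => (hasFDerivAt_sqrtDet hdiff hdet).differentiableAt.fun_mul
      (differentiableAt_minv hdiff hdet α β)
  have hpd : ∀ α, pd α (fun s => ∑ β, sqrtDet h s * minv (h s) α β * W β s) t =
      ∑ β, (pd α (fun s => sqrtDet h s * minv (h s) α β) t * W β t
        + sqrtDet h t * minv (h t) α β * pd α (W β) t) := fun α => by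
    rw [pd_sum fun β _ => (hdensity α β).fun_mul (hW β)]
    exact Finset.sum_congr rfl fun β _ => pd_mul (hdensity α β) (hW β)
  have hconnection : ∑ α, ∑ β, pd α (fun s => sqrtDet h s * minv (h s) α β) t * W β t =
      -(sqrtDet h t * metricTrace (h t) fun α β => ∑ γ, christoffel h γ α β t * W γ t) := by
    rw [Finset.sum_comm, metricTrace_sum, Finset.mul_sum, ← Finset.sum_neg_distrib]
    refine Finset.sum_congr rfl fun γ _ => ?_
    rw [← Finset.sum_mul, sum_pd_sqrtDet_mul_minv hsymm hdiff hdet, metricTrace]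
    simp only [← mul_assoc, ← Finset.sum_mul, neg_mul]
  have hpartial : ∑ α, ∑ β, sqrtDet h t * minv (h t) α β * pd α (W β) t =
      sqrtDet h t * metricTrace (h t) fun α β => pd α (W β) t := by
    simp only [metricTrace, mul_assoc, Finset.mul_sum]
  have hcovDeriv : metricTrace (h t) (covDeriv h W t) =
      metricTrace (h t) (fun α β => pd α (W β) t)
        - metricTrace (h t) fun α β => ∑ γ, christoffel h γ α β t * W γ t :=
    metricTrace_sub _ _
  simp only [hpd, Finset.sum_add_distrib, hconnection, hpartial, hcovDeriv]
  ring

end CovariantDerivative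

section LoweredIndex

/-- The covector components `A_{iα} = g_{ij} X^j_α` of the fields `X^j_α`. -/
def lowerIndex {p n : ℕ} (g : (Fin n → ℝ) → Fin n → Fin n → ℝ)
    (X : Fin n → Fin p → (Fin p → ℝ) → (Fin n → ℝ) → ℝ)
    (i : Fin n) (α : Fin p) (t : Fin p → ℝ) (q : Fin n → ℝ) : ℝ :=
  ∑ j, g q i j * X j α t q

variable {p n : ℕ} {h : (Fin p → ℝ) → Fin p → Fin p → ℝ}
  {g : (Fin n → ℝ) → Fin n → Fin n → ℝ}
  {X : Fin n → Fin p → (Fin p → ℝ) → (Fin n → ℝ) → ℝ}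
  {x : (Fin p → ℝ) → Fin n → ℝ} {t : Fin p → ℝ} {q : Fin n → ℝ}

theorem sum_mul_nablaX (gsymm : ∀ q i j, g q i j = g q j i)
    (gdiff : ∀ i j, DifferentiableAt ℝ (fun y => g y i j) q)
    (gdet : (Matrix.of (g q)).det ≠ 0) {β : Fin p}
    (Xdiff : ∀ i, DifferentiableAt ℝ (X i β t) q) (k m : Fin n) :
    ∑ i, g q k i * nablaX g X m i β t q =
      pd m (lowerIndex g X k β t) q - ∑ ν, christoffel g ν k m q * lowerIndex g X ν β t q := by
  have hleibniz : pd m (lowerIndex g X k β t) q =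
      ∑ i, (pd m (fun y => g y k i) q * X i β t q + g q k i * pd m (X i β t) q) :=
    (pd_sum fun i _ => (gdiff k i).fun_mul (Xdiff i)).trans
      (Finset.sum_congr rfl fun i _ => pd_mul (gdiff k i) (Xdiff i))
  have hconnection : ∑ ν, christoffel g ν k m q * lowerIndex g X ν β t q =
      ∑ i, (∑ ν, g q i ν * christoffel g ν k m q) * X i β t q := by
    simp only [lowerIndex, Finset.mul_sum, Finset.sum_mul]
    rw [Finset.sum_comm]
    refine Finset.sum_congr rfl fun i _ => Finset.sum_congr rfl fun ν _ => ?_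
    rw [gsymm q i ν]
    ring
  have hnabla : ∑ i, g q k i * ∑ j, christoffel g i m j q * X j β t q =
      ∑ i, (∑ ν, g q k ν * christoffel g ν i m q) * X i β t q := by
    simp only [Finset.mul_sum, Finset.sum_mul, christoffel_symm gsymm _ m, mul_assoc]
    exact Finset.sum_comm
  simp only [nablaX, mul_add, Finset.sum_add_distrib, hnabla, hleibniz, hconnection,
    pd_metric gsymm gdet, add_mul]
  ring

theorem sum_mul_Fext (gsymm : ∀ q i j, g q i j = g q j i)
    (gdiff : ∀ i j, DifferentiableAt ℝ (fun y => g y i j) q)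
    (gdet : (Matrix.of (g q)).det ≠ 0) {β : Fin p}
    (Xdiff : ∀ i, DifferentiableAt ℝ (X i β t) q) (k m : Fin n) :
    ∑ i, g q k i * Fext g X m i β t q =
      pd m (lowerIndex g X k β t) q - pd k (lowerIndex g X m β t) q := by
  have hraise : ∀ i, ∑ j, ∑ l, g q j m * minv (g q) i l * nablaX g X l j β t q =
      ∑ l, minv (g q) i l * ∑ j, g q m j * nablaX g X l j β t q := fun i => by
    rw [Finset.sum_comm]
    simp only [Finset.mul_sum, gsymm q _ m, mul_assoc, mul_left_comm (g q m _)]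
  simp only [Fext, hraise, mul_sub, Finset.sum_sub_distrib]
  rw [sum_mul_sum_minv_mul gdet (fun l => ∑ j, g q m j * nablaX g X l j β t q)]
  simp only [sum_mul_nablaX gsymm gdiff gdet Xdiff, christoffel_symm gsymm _ k m]
  ring

theorem sum_mul_Dt {α : Fin p}
    (Xdiff : ∀ i β, DifferentiableAt ℝ (fun s => X i β s q) t) (k : Fin n) (β : Fin p) :
    ∑ i, g q k i * Dt h X α i β t q = covDeriv h (fun β s => lowerIndex g X k β s q) t α β := by
  have h := covDeriv_sum_mul (h := h) (u := Finset.univ) (f := fun i _ => g q k i)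
    (W := fun i β s => X i β s q) (fun i _ => differentiableAt_const _)
    (fun i _ => Xdiff i) α β
  simp only [pd_const, zero_mul, Finset.sum_const_zero, add_zero] at h
  exact h.symm

theorem sum_mul_covHess (gsymm : ∀ q i j, g q i j = g q j i)
    (gdiff : ∀ i j, DifferentiableAt ℝ (fun y => g y i j) (x t))
    (gdet : (Matrix.of (g (x t))).det ≠ 0) (hx : DifferentiableAt ℝ x t)
    (hjet : ∀ i α, DifferentiableAt ℝ (fun s => jet x s i α) t) (k : Fin n) (α β : Fin p) :
    ∑ i, g (x t) k i * covHess h g x i α β t =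
      covDeriv h (fun β s => ∑ j, g (x s) k j * jet x s j β) t α β
        - ∑ j, ∑ l, (∑ ν, g (x t) j ν * christoffel g ν k l (x t)) * jet x t l α * jet x t j β := by
  have hleibniz := covDeriv_sum_mul (h := h) (u := Finset.univ) (f := fun j s => g (x s) k j)
    (W := fun j β s => jet x s j β) (fun j _ => (gdiff k j).fun_comp' t hx) (fun j _ => hjet j) α β
  have hmetric : ∑ j, pd α (fun s => g (x s) k j) t * jet x t j β =
      ∑ j, ∑ l, (∑ ν, g (x t) k ν * christoffel g ν j l (x t)) * jet x t l α * jet x t j β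
        + ∑ j, ∑ l, (∑ ν, g (x t) j ν * christoffel g ν k l (x t)) * jet x t l α * jet x t j β := by
    simp only [pd_comp (gdiff k _) hx, pd_metric gsymm gdet, add_mul, Finset.sum_add_distrib,
      Finset.sum_mul]
  have hconnection : ∑ i, g (x t) k i *
      ∑ l, ∑ j, christoffel g i l j (x t) * jet x t l α * jet x t j β =
      ∑ j, ∑ l, (∑ ν, g (x t) k ν * christoffel g ν j l (x t)) * jet x t l α * jet x t j β := by
    simp only [Finset.mul_sum, Finset.sum_mul, ← mul_assoc]
    rw [Finset.sum_comm_cycle]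
    refine Finset.sum_congr rfl fun j _ => ?_
    simp only [christoffel_symm gsymm _ j]
    exact Finset.sum_comm
  have hcovHess : ∀ i, covHess h g x i α β t = covDeriv h (fun β s => jet x s i β) t α β
      + ∑ l, ∑ j, christoffel g i l j (x t) * jet x t l α * jet x t j β := fun _ => rfl
  simp only [hcovHess, mul_add, Finset.sum_add_distrib, hconnection, hleibniz, hmetric]
  ring

theorem sum_mul_metricTrace_covHess (hsymm : ∀ t α β, h t α β = h t β α)
    (gsymm : ∀ q i j, g q i j = g q j i)
    (gdiff : ∀ i j, DifferentiableAt ℝ (fun y => g y i j) (x t))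
    (gdet : (Matrix.of (g (x t))).det ≠ 0) (hx : DifferentiableAt ℝ x t)
    (hjet : ∀ i α, DifferentiableAt ℝ (fun s => jet x s i α) t) (k : Fin n) :
    ∑ i, g (x t) k i * metricTrace (h t) (fun α β => covHess h g x i α β t) =
      metricTrace (h t) (covDeriv h (fun β s => ∑ j, g (x s) k j * jet x s j β) t)
        - (1 / 2) * metricTrace (h t) fun α β =>
          ∑ i, ∑ j, pd k (fun y => g y i j) (x t) * jet x t i α * jet x t j β := by
  let B := fun α β => ∑ j, ∑ l,
    (∑ ν, g (x t) j ν * christoffel g ν k l (x t)) * jet x t l α * jet x t j β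
  -- The trace only sees the symmetric part of `B`.
  have hsymmetrize : metricTrace (h t) (fun α β =>
      ∑ i, ∑ j, pd k (fun y => g y i j) (x t) * jet x t i α * jet x t j β) =
      metricTrace (h t) B + metricTrace (h t) B := by
    nth_rw 1 [← metricTrace_swap (hsymm t) B]
    rw [← metricTrace_add]
    refine congrArg _ (funext fun α => funext fun β => ?_)
    simp only [B, pd_metric gsymm gdet, christoffel_symm gsymm _ _ k, add_mul,
      Finset.sum_add_distrib, mul_right_comm _ (jet x t _ β)]
    rw [add_right_inj]
    exact Finset.sum_comm
  simp only [← metricTrace_const_mul, ← metricTrace_sum,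
    sum_mul_covHess gsymm gdiff gdet hx hjet]
  rw [metricTrace_const_mul, metricTrace_sub, hsymmetrize]
  ring

end LoweredIndex

section EulerLagrange

/-- The Euler–Lagrange expression `∂L/∂x^k - (d/dt^α)(∂L/∂x^k_α)` of `L` along the first jet of
`x`; its vanishing for all `t` and `k` is `IsExtremal L x`. -/
def eulerLagrange {p n : ℕ} (L : (Fin p → ℝ) → (Fin n → ℝ) → (Fin n → Fin p → ℝ) → ℝ)
    (x : (Fin p → ℝ) → Fin n → ℝ) (t : Fin p → ℝ) (k : Fin n) : ℝ :=
  pd k (fun q => L t q (jet x t)) (x t)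
    - ∑ α, pd α (fun s => fderiv ℝ (fun v => L s (x s) v) (jet x s)
        (Pi.single k (Pi.single α 1))) t

/-- The energy Lagrangian `(½ h^{αβ} g_{ij} x^i_α x^j_β - h^{αβ} x^i_α A_{iβ} + c) √|det h|` coupled
to a covector-valued field `A`. -/
def covectorEnergy {p n : ℕ} (h : (Fin p → ℝ) → Fin p → Fin p → ℝ)
    (g : (Fin n → ℝ) → Fin n → Fin n → ℝ)
    (A : Fin n → Fin p → (Fin p → ℝ) → (Fin n → ℝ) → ℝ) (c : (Fin p → ℝ) → (Fin n → ℝ) → ℝ)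
    (t : Fin p → ℝ) (q : Fin n → ℝ) (v : Fin n → Fin p → ℝ) : ℝ :=
  ((1 / 2) * metricTrace (h t) (fun α β => ∑ i, ∑ j, g q i j * v i α * v j β)
    - metricTrace (h t) (fun α β => ∑ i, v i α * A i β t q) + c t q) * sqrtDet h t

variable {p n : ℕ} {h : (Fin p → ℝ) → Fin p → Fin p → ℝ}
  {g : (Fin n → ℝ) → Fin n → Fin n → ℝ}
  {A : Fin n → Fin p → (Fin p → ℝ) → (Fin n → ℝ) → ℝ} {c : (Fin p → ℝ) → (Fin n → ℝ) → ℝ}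
  {x : (Fin p → ℝ) → Fin n → ℝ} {t : Fin p → ℝ} {q : Fin n → ℝ}

theorem fderiv_energyDensity_apply {E : Type*} [NormedAddCommGroup E]
    [NormedSpace ℝ E] {B : Fin p → Fin p → ℝ} {T U : Fin p → Fin p → E → ℝ} {f : E → ℝ} {z : E}
    (hT : ∀ α β, DifferentiableAt ℝ (T α β) z) (hU : ∀ α β, DifferentiableAt ℝ (U α β) z)
    (hf : DifferentiableAt ℝ f z) (r : ℝ) (w : E) :
    fderiv ℝ (fun z => ((1 / 2) * metricTrace B (fun α β => T α β z)
      - metricTrace B (fun α β => U α β z) + f z) * r) z w =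
      ((1 / 2) * metricTrace B (fun α β => fderiv ℝ (T α β) z w)
        - metricTrace B (fun α β => fderiv ℝ (U α β) z w) + fderiv ℝ f z w) * r := by
  have h := ((((differentiableAt_metricTrace (A := B) hT).hasFDerivAt.const_mul (1 / 2)).fun_sub
    (differentiableAt_metricTrace (A := B) hU).hasFDerivAt).fun_add hf.hasFDerivAt).mul_const r
  rw [h.fderiv, ← fderiv_metricTrace_apply hT, ← fderiv_metricTrace_apply hU]
  simp only [smul_apply, add_apply, sub_apply, smul_eq_mul, mul_comm r]

theorem fderiv_eval_eval_apply {ι κ : Type*} [Finite ι] [Finite κ] (i : ι) (a : κ)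
    (v w : ι → κ → ℝ) : fderiv ℝ (fun v : ι → κ → ℝ => v i a) v w = w i a := by
  cases nonempty_fintype ι
  cases nonempty_fintype κ
  let eval : (ι → κ → ℝ) →L[ℝ] ℝ := .proj (φ := fun _ => ℝ) a ∘L .proj (φ := fun _ => κ → ℝ) i
  exact DFunLike.congr_fun eval.fderiv w

theorem fderiv_sum_mul_apply {ι κ : Type*} [Fintype ι] [Finite κ] (b : ι → ℝ) (a : κ)
    (v w : ι → κ → ℝ) :
    fderiv ℝ (fun v : ι → κ → ℝ => ∑ i, v i a * b i) v w = ∑ i, w i a * b i := by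
  cases nonempty_fintype κ
  rw [fderiv_fun_sum fun i _ => by fun_prop, sum_apply]
  refine Finset.sum_congr rfl fun i _ => ?_
  rw [fderiv_mul_const (by fun_prop), smul_apply, fderiv_eval_eval_apply, smul_eq_mul, mul_comm]

theorem fderiv_sum_sum_mul_mul_apply {ι κ : Type*} [Fintype ι] [Finite κ] {b : ι → ι → ℝ}
    (hb : ∀ i j, b i j = b j i) (a a' : κ) (v w : ι → κ → ℝ) :
    fderiv ℝ (fun v : ι → κ → ℝ => ∑ i, ∑ j, b i j * v i a * v j a') v w =
      ∑ i, w i a * ∑ j, b i j * v j a' + ∑ i, w i a' * ∑ j, b i j * v j a := by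
  cases nonempty_fintype κ
  have hterm : ∀ i j, fderiv ℝ (fun v : ι → κ → ℝ => b i j * v i a * v j a') v w =
      w i a * (b i j * v j a') + w j a' * (b i j * v i a) := fun i j => by
    rw [fderiv_fun_mul (by fun_prop) (by fun_prop), fderiv_const_mul (by fun_prop)]
    simp only [add_apply, smul_apply, fderiv_eval_eval_apply, smul_eq_mul]
    ring
  have hfderiv : fderiv ℝ (fun v : ι → κ → ℝ => ∑ i, ∑ j, b i j * v i a * v j a') v w =
      ∑ i, ∑ j, fderiv ℝ (fun v : ι → κ → ℝ => b i j * v i a * v j a') v w := by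
    rw [fderiv_fun_sum fun i _ => by fun_prop, sum_apply]
    refine Finset.sum_congr rfl fun i _ => ?_
    rw [fderiv_fun_sum fun j _ => by fun_prop, sum_apply]
  simp only [hfderiv, hterm, Finset.sum_add_distrib, Finset.mul_sum]
  rw [add_right_inj, Finset.sum_comm]
  simp only [hb]

theorem fderiv_covectorEnergy_velocity (hsymm : ∀ α β, h t α β = h t β α)
    (gsymm : ∀ i j, g q i j = g q j i) (v w : Fin n → Fin p → ℝ) :
    fderiv ℝ (fun v => covectorEnergy h g A c t q v) v w =
      sqrtDet h t * metricTrace (h t)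
        fun α β => ∑ i, w i α * (∑ j, g q i j * v j β - A i β t q) := by
  let B := fun α β => ∑ i, w i α * ∑ j, g q i j * v j β
  have hpolarize : metricTrace (h t) (fun α β => fderiv ℝ
      (fun v => ∑ i, ∑ j, g q i j * v i α * v j β) v w) = 2 * metricTrace (h t) B := by
    rw [two_mul]
    nth_rw 2 [← metricTrace_swap hsymm B]
    rw [← metricTrace_add]
    simp only [fderiv_sum_sum_mul_mul_apply gsymm, B]
  have hmomentum : metricTrace (h t)
      (fun α β => ∑ i, w i α * (∑ j, g q i j * v j β - A i β t q)) =
      metricTrace (h t) B - metricTrace (h t) (fun α β => ∑ i, w i α * A i β t q) := by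
    simp only [mul_sub, Finset.sum_sub_distrib, metricTrace_sub, B]
  unfold covectorEnergy
  rw [fderiv_energyDensity_apply (fun α β => by fun_prop) (fun α β => by fun_prop)
    (differentiableAt_const _), hpolarize, hmomentum, fderiv_fun_const]
  simp only [fderiv_sum_mul_apply, Pi.zero_apply, zero_apply]
  ring

theorem fderiv_covectorEnergy_velocity_single (hsymm : ∀ α β, h t α β = h t β α)
    (gsymm : ∀ i j, g q i j = g q j i) (v : Fin n → Fin p → ℝ) (k : Fin n) (α : Fin p) :
    fderiv ℝ (fun v => covectorEnergy h g A c t q v) v (Pi.single k (Pi.single α 1)) =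
      ∑ β, sqrtDet h t * minv (h t) α β * (∑ j, g q k j * v j β - A k β t q) := by
  have hcollapse : ∀ γ β, ∑ i, (Pi.single k (Pi.single α 1) : Fin n → Fin p → ℝ) i γ *
      (∑ j, g q i j * v j β - A i β t q) =
      (Pi.single α 1 : Fin p → ℝ) γ * (∑ j, g q k j * v j β - A k β t q) := fun γ β => by
    rw [Finset.sum_eq_single k (fun i _ hi => by simp [hi]) (by simp), Pi.single_eq_same]
  rw [fderiv_covectorEnergy_velocity hsymm gsymm]
  simp only [hcollapse, metricTrace]
  rw [Finset.sum_eq_single α (fun γ _ hγ => by simp [hγ]) (by simp), Finset.mul_sum]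
  simp only [Pi.single_eq_same, one_mul, mul_assoc]

theorem pd_covectorEnergy_position (gdiff : ∀ i j, DifferentiableAt ℝ (fun y => g y i j) q)
    (Adiff : ∀ i α, DifferentiableAt ℝ (A i α t) q) (cdiff : DifferentiableAt ℝ (c t) q)
    (v : Fin n → Fin p → ℝ) (k : Fin n) :
    pd k (fun q => covectorEnergy h g A c t q v) q =
      ((1 / 2) * metricTrace (h t)
          (fun α β => ∑ i, ∑ j, pd k (fun y => g y i j) q * v i α * v j β)
        - metricTrace (h t) (fun α β => ∑ i, v i α * pd k (A i β t) q) + pd k (c t) q)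
      * sqrtDet h t := by
  have hkinetic : ∀ i j α β, DifferentiableAt ℝ (fun q => g q i j * v i α * v j β) q :=
    fun i j α β => ((gdiff i j).mul_const _).mul_const _
  have hcoupling : ∀ i α β, DifferentiableAt ℝ (fun q => v i α * A i β t q) q :=
    fun i α β => (Adiff i β).const_mul _
  have hpd_kinetic : ∀ α β, pd k (fun q => ∑ i, ∑ j, g q i j * v i α * v j β) q =
      ∑ i, ∑ j, pd k (fun y => g y i j) q * v i α * v j β := fun α β => by
    rw [pd_sum fun i _ => DifferentiableAt.fun_sum fun j _ => hkinetic i j α β]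
    refine Finset.sum_congr rfl fun i _ => ?_
    rw [pd_sum fun j _ => hkinetic i j α β]
    refine Finset.sum_congr rfl fun j _ => ?_
    simp only [pd_mul ((gdiff i j).mul_const _) (differentiableAt_const _),
      pd_mul (gdiff i j) (differentiableAt_const _), pd_const, mul_zero, add_zero]
  have hpd_coupling : ∀ α β, pd k (fun q => ∑ i, v i α * A i β t q) q =
      ∑ i, v i α * pd k (A i β t) q := fun α β => by
    rw [pd_sum fun i _ => hcoupling i α β]
    simp only [pd_mul (differentiableAt_const _) (Adiff _ β), pd_const, zero_mul, zero_add]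
  simp only [← hpd_kinetic, ← hpd_coupling]
  exact fderiv_energyDensity_apply
    (fun α β => DifferentiableAt.fun_sum fun i _ => DifferentiableAt.fun_sum fun j _ =>
      hkinetic i j α β)
    (fun α β => DifferentiableAt.fun_sum fun i _ => hcoupling i α β) cdiff _ _

theorem eulerLagrange_covectorEnergy (hsymm : ∀ t α β, h t α β = h t β α)
    (hdiff : ∀ α β, DifferentiableAt ℝ (fun s => h s α β) t) (hdet : (Matrix.of (h t)).det ≠ 0)
    (gsymm : ∀ q i j, g q i j = g q j i)
    (gdiff : ∀ i j, DifferentiableAt ℝ (fun y => g y i j) (x t))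
    (Adiff : ∀ i α, DifferentiableAt ℝ
      (fun z : (Fin p → ℝ) × (Fin n → ℝ) => A i α z.1 z.2) (t, x t))
    (cdiff : DifferentiableAt ℝ (c t) (x t)) (hx : DifferentiableAt ℝ x t)
    (hjet : ∀ i α, DifferentiableAt ℝ (fun s => jet x s i α) t) (k : Fin n) :
    eulerLagrange (covectorEnergy h g A c) x t k = sqrtDet h t *
      (pd k (c t) (x t)
        + metricTrace (h t) (fun α β =>
          ∑ m, (pd m (A k β t) (x t) - pd k (A m β t) (x t)) * jet x t m α)
        + metricTrace (h t) (covDeriv h (fun β s => A k β s (x t)) t)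
        - (metricTrace (h t) (covDeriv h (fun β s => ∑ j, g (x s) k j * jet x s j β) t)
          - (1 / 2) * metricTrace (h t) fun α β =>
            ∑ i, ∑ j, pd k (fun y => g y i j) (x t) * jet x t i α * jet x t j β)) := by
  have Aspace : ∀ i α, DifferentiableAt ℝ (A i α t) (x t) := fun i α =>
    (Adiff i α).comp (f := fun q => (t, q)) (x t) (by fun_prop)
  have Agraph : ∀ i α, DifferentiableAt ℝ (fun s => A i α s (x s)) t := fun i α =>
    (Adiff i α).comp (f := fun s => (s, x s)) t (by fun_prop)
  have hvelocity : ∀ β, DifferentiableAt ℝ (fun s => ∑ j, g (x s) k j * jet x s j β) t :=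
    fun β => DifferentiableAt.fun_sum fun j _ =>
      ((gdiff k j).fun_comp' t hx).fun_mul (hjet j β)
  have hdivergence : ∑ α, pd α (fun s => fderiv ℝ (fun v => covectorEnergy h g A c s (x s) v)
      (jet x s) (Pi.single k (Pi.single α 1))) t =
      sqrtDet h t * (metricTrace (h t) (covDeriv h (fun β s => ∑ j, g (x s) k j * jet x s j β) t)
        - metricTrace (h t) (covDeriv h (fun β s => A k β s (x s)) t)) := by
    simp only [fderiv_covectorEnergy_velocity_single (hsymm _) (gsymm _)]
    rw [sum_pd_sqrtDet_mul_minv_mul hsymm hdiff hdet fun β => (hvelocity β).fun_sub (Agraph k β),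
      ← metricTrace_sub]
    simp only [← covDeriv_sub hvelocity (Agraph k)]
  have hgraph : metricTrace (h t) (covDeriv h (fun β s => A k β s (x s)) t) =
      metricTrace (h t) (covDeriv h (fun β s => A k β s (x t)) t)
        + metricTrace (h t) fun α β => ∑ m, pd m (A k β t) (x t) * jet x t m α := by
    rw [← metricTrace_add]
    refine congrArg _ (funext fun α => funext fun β => ?_)
    rw [covDeriv, covDeriv, pd_comp_graph (Adiff k β) hx]
    ring
  have hcurl : metricTrace (h t) (fun α β =>
      ∑ m, (pd m (A k β t) (x t) - pd k (A m β t) (x t)) * jet x t m α) =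
      metricTrace (h t) (fun α β => ∑ m, pd m (A k β t) (x t) * jet x t m α)
        - metricTrace (h t) fun α β => ∑ m, jet x t m α * pd k (A m β t) (x t) := by
    simp only [sub_mul, Finset.sum_sub_distrib, metricTrace_sub, mul_comm (jet x t _ _)]
  rw [eulerLagrange, pd_covectorEnergy_position gdiff Aspace cdiff, hdivergence, hgraph, hcurl]
  ring

end EulerLagrange

section GeneralEnergy

/-- The Lagrangian `(½ h^{αβ} g_{ij} x^i_α x^j_β - h^{αβ} g_{ij} x^i_α X^j_β + c) √|det h|`. -/
def generalEnergy {p n : ℕ} (h : (Fin p → ℝ) → Fin p → Fin p → ℝ)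
    (g : (Fin n → ℝ) → Fin n → Fin n → ℝ)
    (X : Fin n → Fin p → (Fin p → ℝ) → (Fin n → ℝ) → ℝ) (c : (Fin p → ℝ) → (Fin n → ℝ) → ℝ)
    (t : Fin p → ℝ) (q : Fin n → ℝ) (v : Fin n → Fin p → ℝ) : ℝ :=
  ((1 / 2) * (∑ α, ∑ β, ∑ i, ∑ j, minv (h t) α β * g q i j * v i α * v j β)
    - (∑ α, ∑ β, ∑ i, ∑ j, minv (h t) α β * g q i j * v i α * X j β t q)
    + c t q) * sqrtDet h t

/-- The right-hand side `g^{ij} ∂_j c + h^{αβ} F_k{}^i{}_β x^k_α + h^{αβ} D_α X^i_β` of the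
generalized Poisson equations, with `F_k{}^i{}_β` (which is `Fext`) written out. -/
def poissonForce {p n : ℕ} (h : (Fin p → ℝ) → Fin p → Fin p → ℝ)
    (g : (Fin n → ℝ) → Fin n → Fin n → ℝ)
    (X : Fin n → Fin p → (Fin p → ℝ) → (Fin n → ℝ) → ℝ) (c : (Fin p → ℝ) → (Fin n → ℝ) → ℝ)
    (x : (Fin p → ℝ) → Fin n → ℝ) (t : Fin p → ℝ) (i : Fin n) : ℝ :=
  (∑ j, minv (g (x t)) i j * pd j (fun y => c t y) (x t))
    + (∑ α, ∑ β, ∑ k, minv (h t) α β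
        * (nablaX g X k i β t (x t)
            - ∑ j, ∑ l, g (x t) k j * minv (g (x t)) i l * nablaX g X l j β t (x t))
        * jet x t k α)
    + (∑ α, ∑ β, minv (h t) α β * Dt h X α i β t (x t))

variable {p n : ℕ} {h : (Fin p → ℝ) → Fin p → Fin p → ℝ}
  {g : (Fin n → ℝ) → Fin n → Fin n → ℝ}
  {X : Fin n → Fin p → (Fin p → ℝ) → (Fin n → ℝ) → ℝ} {c : (Fin p → ℝ) → (Fin n → ℝ) → ℝ}
  {x : (Fin p → ℝ) → Fin n → ℝ} {t : Fin p → ℝ}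

theorem generalEnergy_eq_covectorEnergy :
    generalEnergy h g X c = covectorEnergy h g (lowerIndex g X) c := by
  funext t q v
  simp only [generalEnergy, covectorEnergy, lowerIndex, metricTrace, Finset.mul_sum]
  simp only [mul_assoc, mul_left_comm]

theorem poissonForce_eq_metricTrace (gsymm : ∀ q i j, g q i j = g q j i) (i : Fin n) :
    poissonForce h g X c x t i =
      (∑ j, minv (g (x t)) i j * pd j (c t) (x t))
        + metricTrace (h t) (fun α β => ∑ m, Fext g X m i β t (x t) * jet x t m α)
        + metricTrace (h t) (fun α β => Dt h X α i β t (x t)) := by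
  simp only [poissonForce, metricTrace, Fext, Finset.mul_sum, gsymm (x t) _ _, mul_assoc]

theorem sum_mul_poissonForce (gsymm : ∀ q i j, g q i j = g q j i)
    (gdiff : ∀ i j, DifferentiableAt ℝ (fun y => g y i j) (x t))
    (gdet : (Matrix.of (g (x t))).det ≠ 0)
    (Xspace : ∀ i α, DifferentiableAt ℝ (X i α t) (x t))
    (Xtime : ∀ i α, DifferentiableAt ℝ (fun s => X i α s (x t)) t) (k : Fin n) :
    ∑ i, g (x t) k i * poissonForce h g X c x t i =
      pd k (c t) (x t)
        + metricTrace (h t) (fun α β => ∑ m,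
          (pd m (lowerIndex g X k β t) (x t) - pd k (lowerIndex g X m β t) (x t)) * jet x t m α)
        + metricTrace (h t) (covDeriv h (fun β s => lowerIndex g X k β s (x t)) t) := by
  have hcurl : ∑ i, g (x t) k i *
      metricTrace (h t) (fun α β => ∑ m, Fext g X m i β t (x t) * jet x t m α) =
      metricTrace (h t) (fun α β => ∑ m,
        (pd m (lowerIndex g X k β t) (x t) - pd k (lowerIndex g X m β t) (x t)) * jet x t m α) := by
    simp only [← sum_mul_Fext gsymm gdiff gdet (Xspace · _), ← metricTrace_const_mul,
      ← metricTrace_sum, Finset.mul_sum, Finset.sum_mul, ← mul_assoc]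
    exact congrArg _ (funext fun α => funext fun β => Finset.sum_comm)
  have hdivergence : ∑ i, g (x t) k i * metricTrace (h t) (fun α β => Dt h X α i β t (x t)) =
      metricTrace (h t) (covDeriv h (fun β s => lowerIndex g X k β s (x t)) t) := by
    simp only [← metricTrace_const_mul, ← metricTrace_sum, sum_mul_Dt Xtime]
  simp only [poissonForce_eq_metricTrace gsymm, mul_add, Finset.sum_add_distrib, hcurl,
    hdivergence, sum_mul_sum_minv_mul gdet fun j => pd j (c t) (x t)]

theorem eulerLagrange_generalEnergy (hsymm : ∀ t α β, h t α β = h t β α)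
    (hdiff : ∀ α β, DifferentiableAt ℝ (fun s => h s α β) t) (hdet : (Matrix.of (h t)).det ≠ 0)
    (gsymm : ∀ q i j, g q i j = g q j i)
    (gdiff : ∀ i j, DifferentiableAt ℝ (fun y => g y i j) (x t))
    (gdet : (Matrix.of (g (x t))).det ≠ 0)
    (Xdiff : ∀ i α, DifferentiableAt ℝ
      (fun z : (Fin p → ℝ) × (Fin n → ℝ) => X i α z.1 z.2) (t, x t))
    (cdiff : DifferentiableAt ℝ (c t) (x t)) (hx : DifferentiableAt ℝ x t)
    (hjet : ∀ i α, DifferentiableAt ℝ (fun s => jet x s i α) t) (k : Fin n) :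
    eulerLagrange (generalEnergy h g X c) x t k = sqrtDet h t *
      ∑ i, g (x t) k i * (poissonForce h g X c x t i
        - metricTrace (h t) fun α β => covHess h g x i α β t) := by
  have Xspace : ∀ i α, DifferentiableAt ℝ (X i α t) (x t) := fun i α =>
    (Xdiff i α).comp (f := fun q => (t, q)) (x t) (by fun_prop)
  have Xtime : ∀ i α, DifferentiableAt ℝ (fun s => X i α s (x t)) t := fun i α =>
    (Xdiff i α).comp (f := fun s => (s, x t)) t (by fun_prop)
  have gdiff_snd : ∀ i j, DifferentiableAt ℝ
      (fun z : (Fin p → ℝ) × (Fin n → ℝ) => g z.2 i j) (t, x t) := fun i j =>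
    (gdiff i j).comp (f := Prod.snd) (t, x t) differentiableAt_snd
  have Adiff : ∀ i α, DifferentiableAt ℝ
      (fun z : (Fin p → ℝ) × (Fin n → ℝ) => lowerIndex g X i α z.1 z.2) (t, x t) := fun i α =>
    DifferentiableAt.fun_sum fun j _ => (gdiff_snd i j).fun_mul (Xdiff j α)
  rw [generalEnergy_eq_covectorEnergy,
    eulerLagrange_covectorEnergy hsymm hdiff hdet gsymm gdiff Adiff cdiff hx hjet,
    ← sum_mul_poissonForce gsymm gdiff gdet Xspace Xtime,
    ← sum_mul_metricTrace_covHess hsymm gsymm gdiff gdet hx hjet]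
  simp only [mul_sub, Finset.sum_sub_distrib]

end GeneralEnergy

theorem differentiable_jet {p n : ℕ} {x : (Fin p → ℝ) → Fin n → ℝ} (hx : ContDiff ℝ 2 x)
    (i : Fin n) (α : Fin p) : Differentiable ℝ fun s => jet x s i α :=
  (((contDiff_pi.mp hx i).fderiv_right (m := 1) (by norm_num)).clm_apply
    contDiff_const).differentiable one_ne_zero

theorem potential_iff_extremal_of_general_energy_general
    {p n : ℕ} {h : (Fin p → ℝ) → Fin p → Fin p → ℝ}
    (hsymm : ∀ t α β, h t α β = h t β α)
    (hdiff : ∀ α β, Differentiable ℝ fun t => h t α β)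
    (hdet : ∀ t, (Matrix.of (h t)).det ≠ 0)
    {g : (Fin n → ℝ) → Fin n → Fin n → ℝ}
    (gsymm : ∀ q i j, g q i j = g q j i)
    (gdiff : ∀ i j, Differentiable ℝ fun q => g q i j)
    (gdet : ∀ q, (Matrix.of (g q)).det ≠ 0)
    {X : Fin n → Fin p → (Fin p → ℝ) → (Fin n → ℝ) → ℝ}
    (Xdiff : ∀ i α, Differentiable ℝ fun z : (Fin p → ℝ) × (Fin n → ℝ) => X i α z.1 z.2)
    {c : (Fin p → ℝ) → (Fin n → ℝ) → ℝ} (cdiff : ∀ t, Differentiable ℝ (c t))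
    {x : (Fin p → ℝ) → Fin n → ℝ} (hx : Differentiable ℝ x)
    (hjet : ∀ i α, Differentiable ℝ fun s => jet x s i α) :
    IsExtremal (generalEnergy h g X c) x ↔ ∀ (t : Fin p → ℝ) (i : Fin n),
      ∑ α, ∑ β, minv (h t) α β * covHess h g x i α β t = poissonForce h g X c x t i := by
  have hEL := fun t k => eulerLagrange_generalEnergy (t := t) hsymm (hdiff · · t) (hdet t) gsymm
    (gdiff · · (x t)) (gdet (x t)) (Xdiff · · (t, x t)) (cdiff t (x t)) (hx t) (hjet · · t) k
  refine forall_congr' fun t => ?_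
  let defect := fun i => poissonForce h g X c x t i
    - metricTrace (h t) fun α β => covHess h g x i α β t
  calc (∀ k, eulerLagrange (generalEnergy h g X c) x t k = 0)
      ↔ ∀ k, ∑ i, g (x t) k i * defect i = 0 := by
        simp only [hEL, mul_eq_zero, (sqrtDet_pos (hdet t)).ne', false_or, defect]
    _ ↔ ∀ i, defect i = 0 := by
        refine ⟨fun h i => ?_, fun h k => ?_⟩
        · rw [← sum_minv_mul_sum_mul (gdet (x t)) defect i]
          simp only [h, mul_zero, Finset.sum_const_zero]
        · simp only [h, mul_zero, Finset.sum_const_zero]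
    _ ↔ ∀ i, metricTrace (h t) (fun α β => covHess h g x i α β t) = poissonForce h g X c x t i :=
        forall_congr' fun i => sub_eq_zero.trans eq_comm

/-- extremals of the general energy Lagrangian are exactly the solutions of
the generalized Poisson (potential map) equations. -/
theorem potential_iff_extremal_of_general_energy
    {p n : ℕ} (hp : 0 < p) (hn : 0 < n)
    (h : (Fin p → ℝ) → Fin p → Fin p → ℝ)
    (hsymm : ∀ t α β, h t α β = h t β α)
    (hsmooth : ∀ α β, ContDiff ℝ (⊤ : ℕ∞) fun t => h t α β)
    (hdet : ∀ t, (Matrix.of (h t)).det ≠ 0)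
    (g : (Fin n → ℝ) → Fin n → Fin n → ℝ)
    (gsymm : ∀ q i j, g q i j = g q j i)
    (gsmooth : ∀ i j, ContDiff ℝ (⊤ : ℕ∞) fun q => g q i j)
    (gdet : ∀ q, (Matrix.of (g q)).det ≠ 0)
    (X : Fin n → Fin p → (Fin p → ℝ) → (Fin n → ℝ) → ℝ)
    (Xsmooth : ∀ i α, ContDiff ℝ (⊤ : ℕ∞) fun z : (Fin p → ℝ) × (Fin n → ℝ) => X i α z.1 z.2)
    (c : (Fin p → ℝ) → (Fin n → ℝ) → ℝ)
    (csmooth : ContDiff ℝ (⊤ : ℕ∞) fun z : (Fin p → ℝ) × (Fin n → ℝ) => c z.1 z.2)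
    (x : (Fin p → ℝ) → Fin n → ℝ) (hx : ContDiff ℝ (⊤ : ℕ∞) x) :
    IsExtremal
      (fun t q v =>
        ((1 / 2) * (∑ α, ∑ β, ∑ i, ∑ j, minv (h t) α β * g q i j * v i α * v j β)
          - (∑ α, ∑ β, ∑ i, ∑ j, minv (h t) α β * g q i j * v i α * X j β t q)
          + c t q) * sqrtDet h t) x
      ↔ ∀ (t : Fin p → ℝ) (i : Fin n),
          ∑ α, ∑ β, minv (h t) α β * covHess h g x i α β t
            = (∑ j, minv (g (x t)) i j * pd j (fun y => c t y) (x t))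
              + (∑ α, ∑ β, ∑ k, minv (h t) α β
                  * (nablaX g X k i β t (x t)
                      - ∑ j, ∑ l, g (x t) k j * minv (g (x t)) i l
                          * nablaX g X l j β t (x t))
                  * jet x t k α)
              + (∑ α, ∑ β, minv (h t) α β * Dt h X α i β t (x t)) :=
  potential_iff_extremal_of_general_energy_general hsymm
    (fun α β => (hsmooth α β).differentiable (by simp)) hdet gsymm
    (fun i j => (gsmooth i j).differentiable (by simp)) gdet
    (fun i α => (Xsmooth i α).differentiable (by simp))
    (fun t => (csmooth.comp (contDiff_prodMk_right t)).differentiable (by simp))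
    (hx.differentiable (by simp)) (differentiable_jet (hx.of_le (WithTop.coe_le_coe.mpr le_top)))
end
end

section
/- (Potential maps / Lorentz–Udriste world-force law.) Let X^i_α : ℝ^p × ℝ^n → ℝ be smooth. Every smooth solution x : ℝ^p → ℝ^n of the first-order PDEs system x^i_α(t) = X^i_α(t, x(t)) is an extremal of the Lagrangian L = ½ h^{αβ} g_{ij} (x^i_α − X^i_α)(x^j_β − X^j_β) √|det h|, i.e. it satisfies the Euler–Lagrange equations of L. -/
/-!
The Lagrangian is quadratic in the deviation `x^i_α - X^i_α(t, x)`, which vanishes along a solution.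
Hence `L(t, ·, ·)` vanishes to second order at every point `(x(t), x_·(t))` of the first jet, so
`∂L/∂x^k` and `∂L/∂x^k_α` are identically zero along the jet, and with the latter so is its total
derivative.
-/

open scoped BigOperators

noncomputable section

open Asymptotics Topology

lemma isExtremal_of_hasFDerivAt_zero {p n : ℕ}
    {L : (Fin p → ℝ) → (Fin n → ℝ) → (Fin n → Fin p → ℝ) → ℝ} {x : (Fin p → ℝ) → Fin n → ℝ}
    (hL : ∀ t, HasFDerivAt (fun z : (Fin n → ℝ) × (Fin n → Fin p → ℝ) ↦ L t z.1 z.2)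
      (0 : _ →L[ℝ] ℝ) (x t, jet x t)) :
    IsExtremal L x := by
  intro t k
  have position : fderiv ℝ (fun q ↦ L t q (jet x t)) (x t) = 0 := by
    simpa [Function.comp_def] using
      ((hL t).comp (f := (·, jet x t)) (x t) (hasFDerivAt_prodMk_left _ _)).fderiv
  have velocity (s) : fderiv ℝ (fun v ↦ L s (x s) v) (jet x s) = 0 := by
    simpa [Function.comp_def] using
      ((hL s).comp (f := (x s, ·)) (jet x s) (hasFDerivAt_prodMk_right _ _)).fderiv
  simp [position, velocity, pd]

lemma hasFDerivAt_zero_of_isBigO_norm_sq {𝕜 E F G : Type*} [NontriviallyNormedField 𝕜]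
    [NormedAddCommGroup E] [NormedSpace 𝕜 E] [NormedAddCommGroup F] [NormedSpace 𝕜 F]
    [NormedAddCommGroup G] [NormedSpace 𝕜 G] {f : E → F} {u : E → G} {y : E}
    (hu : DifferentiableAt 𝕜 u y) (hu₀ : u y = 0) (hf : f =O[𝓝 y] fun z ↦ ‖u z‖ ^ 2) :
    HasFDerivAt f (0 : E →L[𝕜] F) y := by
  have hu_lin : u =O[𝓝 y] fun z ↦ z - y := by simpa [hu₀] using hu.isBigO_sub
  exact (hf.trans (hu_lin.norm_norm.pow 2)).hasFDerivAt one_lt_two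

lemma isBigO_sum_mul_mul_norm_sq {E ι κ : Type*} [Fintype ι] [Fintype κ] {l : Filter E}
    {a : ι → ι → κ → κ → E → ℝ} (ha : ∀ α β i j, a α β i j =O[l] fun _ ↦ (1 : ℝ))
    (u : E → κ → ι → ℝ) :
    (fun z ↦ ∑ α, ∑ β, ∑ i, ∑ j, a α β i j z * u z i α * u z j β) =O[l] fun z ↦ ‖u z‖ ^ 2 := by
  have entry (i α) : (fun z ↦ u z i α) =O[l] fun z ↦ ‖u z‖ :=
    .of_norm_le fun z ↦ (norm_le_pi_norm (u z i) α).trans (norm_le_pi_norm (u z) i)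
  refine .fun_sum fun α _ ↦ .fun_sum fun β _ ↦ .fun_sum fun i _ ↦ .fun_sum fun j _ ↦ ?_
  simpa [sq] using ((ha α β i j).mul (entry i α)).mul (entry j β)

section Deviation

variable {p n : ℕ}

/-- The deviation `x^i_α - X^i_α(t, x)` of a 1-jet from the first-order system
`x^i_α = X^i_α(t, x)`, as a function of the pair `z = (x, x_·)`. -/
def deviation (X : Fin n → Fin p → (Fin p → ℝ) → (Fin n → ℝ) → ℝ) (t : Fin p → ℝ)
    (z : (Fin n → ℝ) × (Fin n → Fin p → ℝ)) : Fin n → Fin p → ℝ :=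
  fun i α ↦ z.2 i α - X i α t z.1

/-- Solutions of the first-order system `x^i_α = X^i_α(t, x)`. Differentiability has to be
demanded separately, since `jet x t i α` takes the junk value `0` where the coordinate `x^i`
is not differentiable. -/
structure IsSolution (X : Fin n → Fin p → (Fin p → ℝ) → (Fin n → ℝ) → ℝ)
    (x : (Fin p → ℝ) → Fin n → ℝ) : Prop where
  differentiable : Differentiable ℝ x
  jet_eq : ∀ t i α, jet x t i α = X i α t (x t)

variable {X : Fin n → Fin p → (Fin p → ℝ) → (Fin n → ℝ) → ℝ} {x : (Fin p → ℝ) → Fin n → ℝ}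

lemma IsSolution.deviation_eq_zero (hx : IsSolution X x) (t : Fin p → ℝ) :
    deviation X t (x t, jet x t) = 0 := by
  ext i α
  exact sub_eq_zero.2 (hx.jet_eq t i α)

lemma differentiableAt_deviation {t : Fin p → ℝ} {z : (Fin n → ℝ) × (Fin n → Fin p → ℝ)}
    (hX : ∀ i α, DifferentiableAt ℝ (X i α t) z.1) : DifferentiableAt ℝ (deviation X t) z := by
  unfold deviation
  fun_prop

lemma isBigO_lagrangian_norm_deviation_sq {h : (Fin p → ℝ) → Fin p → Fin p → ℝ}
    {g : (Fin n → ℝ) → Fin n → Fin n → ℝ} {t : Fin p → ℝ} {z₀ : (Fin n → ℝ) × (Fin n → Fin p → ℝ)}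
    (hg : ∀ i j, ContinuousAt (fun q ↦ g q i j) z₀.1) :
    (fun z : (Fin n → ℝ) × (Fin n → Fin p → ℝ) ↦
      (1 / 2) * (∑ α, ∑ β, ∑ i, ∑ j, minv (h t) α β * g z.1 i j
        * (z.2 i α - X i α t z.1) * (z.2 j β - X j β t z.1)) * sqrtDet h t)
      =O[𝓝 z₀] fun z ↦ ‖deviation X t z‖ ^ 2 := by
  have coeff (α β i j) : (fun z : (Fin n → ℝ) × (Fin n → Fin p → ℝ) ↦
      minv (h t) α β * g z.1 i j) =O[𝓝 z₀] fun _ ↦ (1 : ℝ) :=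
    ((hg i j).comp continuousAt_fst).isBigO_one ℝ |>.const_mul_left _
  simpa only [deviation, mul_comm _ (sqrtDet h t)] using
    ((isBigO_sum_mul_mul_norm_sq coeff (deviation X t)).const_mul_left _).const_mul_left _

theorem solution_is_potential_map_general
    {L : (Fin p → ℝ) → (Fin n → ℝ) → (Fin n → Fin p → ℝ) → ℝ}
    (hx : IsSolution X x) (hX : ∀ t i α, DifferentiableAt ℝ (X i α t) (x t))
    (hL : ∀ t, (fun z : (Fin n → ℝ) × (Fin n → Fin p → ℝ) ↦ L t z.1 z.2)
      =O[𝓝 (x t, jet x t)] fun z ↦ ‖deviation X t z‖ ^ 2) :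
    IsExtremal L x :=
  isExtremal_of_hasFDerivAt_zero fun t ↦
    hasFDerivAt_zero_of_isBigO_norm_sq (differentiableAt_deviation (hX t))
      (hx.deviation_eq_zero t) (hL t)

end Deviation

/-- Lorentz–Udriste world-force law: every solution of the first-order
system `x^i_α = X^i_α(t, x(t))` is an extremal of
`L = ½ h^{αβ} g_{ij}(x^i_α − X^i_α)(x^j_β − X^j_β)√|det h|`. -/
theorem solution_is_potential_map
    {p n : ℕ} (hp : 0 < p) (hn : 0 < n)
    (h : (Fin p → ℝ) → Fin p → Fin p → ℝ)
    (hsymm : ∀ t α β, h t α β = h t β α)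
    (hsmooth : ∀ α β, ContDiff ℝ (⊤ : ℕ∞) fun t => h t α β)
    (hdet : ∀ t, (Matrix.of (h t)).det ≠ 0)
    (g : (Fin n → ℝ) → Fin n → Fin n → ℝ)
    (gsymm : ∀ q i j, g q i j = g q j i)
    (gsmooth : ∀ i j, ContDiff ℝ (⊤ : ℕ∞) fun q => g q i j)
    (gdet : ∀ q, (Matrix.of (g q)).det ≠ 0)
    (X : Fin n → Fin p → (Fin p → ℝ) → (Fin n → ℝ) → ℝ)
    (Xsmooth : ∀ i α, ContDiff ℝ (⊤ : ℕ∞) fun z : (Fin p → ℝ) × (Fin n → ℝ) => X i α z.1 z.2)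
    (x : (Fin p → ℝ) → Fin n → ℝ) (hx : ContDiff ℝ (⊤ : ℕ∞) x)
    (hsol : ∀ (t : Fin p → ℝ) (i : Fin n) (α : Fin p), jet x t i α = X i α t (x t)) :
    IsExtremal
      (fun t q v =>
        (1 / 2) * (∑ α, ∑ β, ∑ i, ∑ j, minv (h t) α β * g q i j
          * (v i α - X i α t q) * (v j β - X j β t q)) * sqrtDet h t) x := by
  have hX (t i α) : Differentiable ℝ (X i α t) :=
    ((Xsmooth i α).differentiable (by simp)).comp
      ((differentiable_const t).prodMk differentiable_id)
  exact solution_is_potential_map_general ⟨hx.differentiable (by simp), hsol⟩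
    (fun t i α ↦ hX t i α (x t)) fun t ↦
      isBigO_lagrangian_norm_deviation_sq fun i j ↦ (gsmooth i j).continuous.continuousAt
end
end
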